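/- Assume a_1 = 0 (i.e. B(0) = 0). Then: (i) every symmetric polynomial function of the full family φ_0(z), …, φ_{n−1}(z) can be written as a polynomial in B(z) (and every symmetric rational function as a rational function of B(z)); (ii) every symmetric polynomial function of the reduced family φ_1(z), …, φ_{n−1}(z) can be written as a polynomial in z and B(z) (and every symmetric rational function as a rational function of z and B(z)). -/

import Mathlib

/-!
The fiber of `B` through `z` is the root multiset of `∏ (a_j - w) - B(z) ∏ (1 - conj(a_j) w)`.
Because one of the `a_j` vanishes, the second product has degree less than `n`, so this polynomial
has degree `n` and leading coefficient `(-1)^n`, independent of `z`. By Vieta the elementary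
symmetric functions of the fiber are therefore affine in `B(z)` (`exists_esymm_fiberMS`), and the
fundamental theorem of symmetric polynomials (`exists_of_esymm`) gives the claim for the full family.

For the reduced family, `e_{k+1}(φ_0, …, φ_{n-1}) = e_{k+1}(φ_1, …, φ_{n-1}) +
z e_k(φ_1, …, φ_{n-1})` can be solved recursively, so the elementary symmetric functions of
`φ_1, …, φ_{n-1}` are polynomials in `z` and `B(z)` (`exists_esymm_erase`). The rational statements
follow by treating numerator and denominator separately.
-/

open Complex Polynomial MeasureTheory Metric Set Filter Topology
open scoped Classical

noncomputable section

/-- The open unit disk in `ℂ`. -/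
def uDisk : Set ℂ := Metric.ball 0 1

/-- The closed unit disk in `ℂ`. -/
def cDisk : Set ℂ := Metric.closedBall 0 1

/-- The finite Blaschke product with zero set `a 0, …, a (n-1)`:
`B(z) = ∏_j (a_j - z)/(1 - conj(a_j)·z)`. -/
def blaschke {n : ℕ} (a : Fin n → ℂ) (z : ℂ) : ℂ :=
  ∏ j, (a j - z) / (1 - (starRingEnd ℂ) (a j) * z)

/-- The multiset of the `n` solutions (with multiplicity) `φ_0(z) = z, φ_1(z), …, φ_{n-1}(z)`
of `B(w) = B(z)`, realized as the roots of the polynomial equation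
`∏_j (a_j - w) = B(z) · ∏_j (1 - conj(a_j)·w)`. -/
def fiberMS {n : ℕ} (a : Fin n → ℂ) (z : ℂ) : Multiset ℂ :=
  ((∏ j, (Polynomial.C (a j) - Polynomial.X)) -
    Polynomial.C (blaschke a z) *
      ∏ j, (1 - Polynomial.C ((starRingEnd ℂ) (a j)) * Polynomial.X)).roots

/-- `𝒟(f)(z) = ∏_{j=1}^{n-1} (f(z) - f(φ_j(z)))`, where `φ_1(z), …, φ_{n-1}(z)` is the
fiber of `B` over `B(z)` with one copy of `z` removed.  In particular
`calD a id z = ∏_{j=1}^{n-1} (z - φ_j(z))`. -/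
def calD {n : ℕ} (a : Fin n → ℂ) (f : ℂ → ℂ) (z : ℂ) : ℂ :=
  (((fiberMS a z).erase z).map (fun w => f z - f w)).prod

/-- `G` is (the holomorphic extension after removing singularities of) `Γ(f) = 𝒟(f)/𝒟`. -/
def IsGamma {n : ℕ} (a : Fin n → ℂ) (f G : ℂ → ℂ) : Prop :=
  DifferentiableOn ℂ G uDisk ∧ ∀ z ∈ uDisk, G z * calD a id z = calD a f z

/-- `p`-th power integral mean of `f` on the circle of radius `r`. -/
def circMean (p : ℝ) (f : ℂ → ℂ) (r : ℝ) : ℝ :=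
  ∫ θ in (0:ℝ)..(2 * Real.pi), ‖f ((r : ℂ) * Complex.exp ((θ : ℂ) * Complex.I))‖ ^ p

/-- The `H^p` norm of `f` (for `0 < p < ∞`). -/
def hpNorm (p : ℝ) (f : ℂ → ℂ) : ℝ :=
  (sSup {m : ℝ | ∃ r ∈ Set.Ico (0:ℝ) 1, m = circMean p f r}) ^ (1 / p)

/-- Membership in the Hardy space `H^p`, `0 < p < ∞`: holomorphic on the disk with
uniformly bounded integral means. -/
def MemHp (p : ℝ) (f : ℂ → ℂ) : Prop :=
  DifferentiableOn ℂ f uDisk ∧ ∃ C : ℝ, ∀ r ∈ Set.Ico (0:ℝ) 1, circMean p f r ≤ C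

/-- Membership in `H^∞`: bounded holomorphic functions on the disk. -/
def MemHinf (f : ℂ → ℂ) : Prop :=
  DifferentiableOn ℂ f uDisk ∧ ∃ C : ℝ, ∀ z ∈ uDisk, ‖f z‖ ≤ C

/-- The `H^∞` (sup) norm. -/
def hinfNorm (f : ℂ → ℂ) : ℝ := sSup {m : ℝ | ∃ z ∈ uDisk, m = ‖f z‖}

/-- The algebra of all polynomials in the functions `F 0, …, F (m-1)`. -/
def algGen (m : ℕ) (F : Fin m → (ℂ → ℂ)) : Set (ℂ → ℂ) :=
  {h | ∃ P : MvPolynomial (Fin m) ℂ, ∀ z : ℂ, h z = MvPolynomial.eval (fun i => F i z) P}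

/-- The algebra `ℂ[F,G]` of all polynomials in the two functions `F` and `G`. -/
def algGen2 (F G : ℂ → ℂ) : Set (ℂ → ℂ) := algGen 2 ![F, G]

/-- The (sequential) closure of `S` in `H^p`. -/
def hpClosure (p : ℝ) (S : Set (ℂ → ℂ)) : Set (ℂ → ℂ) :=
  {f | MemHp p f ∧ ∃ u : ℕ → (ℂ → ℂ), (∀ k, u k ∈ S) ∧
    Filter.Tendsto (fun k => hpNorm p (fun z => f z - u k z)) Filter.atTop (nhds 0)}

/-- `S` has finite codimension in `H^p`: finitely many functions in `H^p` together with `S`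
span all of `H^p`. -/
def FiniteCodimHp (p : ℝ) (S : Set (ℂ → ℂ)) : Prop :=
  ∃ (k : ℕ) (e : Fin k → (ℂ → ℂ)), (∀ i, MemHp p (e i)) ∧
    ∀ f, MemHp p f → ∃ (c : Fin k → ℂ) (s : ℂ → ℂ), s ∈ S ∧
      ∀ z ∈ uDisk, f z = s z + ∑ i, c i * e i z

/-- Inner function: bounded by 1, holomorphic, radial limits of modulus 1 a.e. -/
def IsInner (f : ℂ → ℂ) : Prop :=
  DifferentiableOn ℂ f uDisk ∧ (∀ z ∈ uDisk, ‖f z‖ ≤ 1) ∧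
  ∀ᵐ θ : ℝ ∂volume, ∃ l : ℂ, ‖l‖ = 1 ∧
    Filter.Tendsto (fun r : ℝ => f ((r : ℂ) * Complex.exp ((θ : ℂ) * Complex.I)))
      (nhdsWithin 1 (Set.Iio 1)) (nhds l)

/-- `J` divides `h`, with a quotient holomorphic on the disk. -/
def InnerDivides (J h : ℂ → ℂ) : Prop :=
  ∃ k : ℂ → ℂ, DifferentiableOn ℂ k uDisk ∧ ∀ z ∈ uDisk, h z = J z * k z

/-- Outer function: a holomorphic function on the disk whose only inner divisors are
unimodular constants (i.e. whose inner part is a unimodular constant). -/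
def IsOuter (h : ℂ → ℂ) : Prop :=
  DifferentiableOn ℂ h uDisk ∧
  ∀ J : ℂ → ℂ, IsInner J → InnerDivides J h →
    ∃ c : ℂ, ‖c‖ = 1 ∧ ∀ z ∈ uDisk, J z = c

/-- `I` is the inner part of `h`: `I` is inner and `h = I·F` with `F` outer. -/
def IsInnerPartOf (I h : ℂ → ℂ) : Prop :=
  IsInner I ∧ ∃ F : ℂ → ℂ, IsOuter F ∧ ∀ z ∈ uDisk, h z = I z * F z

/-- Finite Blaschke product (up to a unimodular constant factor). -/
def IsFiniteBlaschke (f : ℂ → ℂ) : Prop :=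
  ∃ (m : ℕ) (c : ℂ) (b : Fin m → ℂ), ‖c‖ = 1 ∧ (∀ i, b i ∈ uDisk) ∧
    ∀ z ∈ uDisk, f z = c * ∏ i, (b i - z) / (1 - (starRingEnd ℂ) (b i) * z)

/-- `h` has no singular inner factor: every zero-free inner divisor of `h` is a
unimodular constant. -/
def NoSingularInnerFactor (h : ℂ → ℂ) : Prop :=
  ∀ J : ℂ → ℂ, IsInner J → (∀ z ∈ uDisk, J z ≠ 0) → InnerDivides J h →
    ∃ c : ℂ, ‖c‖ = 1 ∧ ∀ z ∈ uDisk, J z = c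

/-- The polynomial `∏ (a_j - w) - b ∏ (1 - conj(a_j) w)` in `w`; at `b = B(z)` its roots form the
fiber of `B` through `z`. -/
def fiberPoly {n : ℕ} (a : Fin n → ℂ) (b : ℂ) : Polynomial ℂ :=
  (∏ j, (Polynomial.C (a j) - Polynomial.X)) -
    Polynomial.C b * ∏ j, (1 - Polynomial.C ((starRingEnd ℂ) (a j)) * Polynomial.X)

/-- The denominator has degree below `n` because its factor at a zero `a i = 0` is constant. -/
lemma natDegree_denom_lt {n : ℕ} (a : Fin n → ℂ) {i : Fin n} (hi : a i = 0) :
    (∏ j, (1 - Polynomial.C ((starRingEnd ℂ) (a j)) * Polynomial.X)).natDegree < n := by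
  rw [← Finset.mul_prod_erase Finset.univ _ (Finset.mem_univ i), hi]
  simp only [map_zero, zero_mul, sub_zero, one_mul]
  refine (Polynomial.natDegree_prod_le _ _).trans_lt ?_
  have h : ∀ j ∈ Finset.univ.erase i,
      (1 - Polynomial.C ((starRingEnd ℂ) (a j)) * Polynomial.X).natDegree ≤ 1 := by
    intro j _
    compute_degree
  refine (Finset.sum_le_card_nsmul _ _ _ h).trans_lt ?_
  rw [Finset.card_erase_of_mem (Finset.mem_univ _), Finset.card_univ, Fintype.card_fin]
  have := i.pos
  simp
  omega

lemma natDegree_numer {n : ℕ} (a : Fin n → ℂ) :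
    (∏ j, (Polynomial.C (a j) - Polynomial.X)).natDegree = n := by
  have h : ∀ j, (Polynomial.C (a j) - Polynomial.X).natDegree = 1 := fun j => by
    rw [Polynomial.natDegree_sub, Polynomial.natDegree_X_sub_C]
  rw [Polynomial.natDegree_prod _ _ fun j _ => Polynomial.ne_zero_of_natDegree_gt
    (n := 0) (by rw [h]; exact one_pos)]
  simp [h]

lemma leadingCoeff_numer {n : ℕ} (a : Fin n → ℂ) :
    (∏ j, (Polynomial.C (a j) - Polynomial.X)).leadingCoeff = (-1) ^ n := by
  have h : ∀ j, (Polynomial.C (a j) - Polynomial.X).leadingCoeff = -1 := fun j => by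
    rw [← neg_sub, Polynomial.leadingCoeff_neg, Polynomial.leadingCoeff_X_sub_C]
  simp [Polynomial.leadingCoeff_prod, h]

lemma natDegree_fiberPoly {n : ℕ} (a : Fin n → ℂ) {i : Fin n} (hi : a i = 0)
    (b : ℂ) : (fiberPoly a b).natDegree = n := by
  rw [fiberPoly, Polynomial.natDegree_sub_eq_left_of_natDegree_lt, natDegree_numer]
  rw [natDegree_numer]
  exact (Polynomial.natDegree_C_mul_le _ _).trans_lt (natDegree_denom_lt a hi)

lemma leadingCoeff_fiberPoly {n : ℕ} (a : Fin n → ℂ) {i : Fin n} (hi : a i = 0)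
    (b : ℂ) : (fiberPoly a b).leadingCoeff = (-1) ^ n := by
  rw [fiberPoly, Polynomial.leadingCoeff_sub_of_degree_lt, leadingCoeff_numer]
  apply Polynomial.degree_lt_degree
  rw [natDegree_numer]
  exact (Polynomial.natDegree_C_mul_le _ _).trans_lt (natDegree_denom_lt a hi)

lemma card_fiberMS {n : ℕ} (a : Fin n → ℂ) {i : Fin n} (hi : a i = 0) (z : ℂ) :
    Multiset.card (fiberMS a z) = n :=
  (IsAlgClosed.card_roots_eq_natDegree (p := fiberPoly a (blaschke a z))).trans
    (natDegree_fiberPoly a hi _)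

/-- By Vieta, since the leading coefficient of the fiber polynomial does not involve `B(z)`, the
elementary symmetric functions of the fiber are polynomials (of degree at most one) in `B(z)`. -/
lemma exists_esymm_fiberMS {n : ℕ} (a : Fin n → ℂ) {i : Fin n} (hi : a i = 0)
    (k : ℕ) :
    ∃ q : Polynomial ℂ, ∀ z, (fiberMS a z).esymm k = q.eval (blaschke a z) := by
  by_cases hk : k ≤ n
  · refine ⟨Polynomial.C ((-1) ^ n * (-1) ^ k) *
      (Polynomial.C ((∏ j, (Polynomial.C (a j) - Polynomial.X)).coeff (n - k)) -
        Polynomial.X * Polynomial.C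
          ((∏ j, (1 - Polynomial.C ((starRingEnd ℂ) (a j)) * Polynomial.X)).coeff (n - k))),
      fun z => ?_⟩
    have hd := natDegree_fiberPoly a hi (blaschke a z)
    have h := Polynomial.coeff_eq_esymm_roots_of_card (p := fiberPoly a (blaschke a z))
      IsAlgClosed.card_roots_eq_natDegree (k := n - k) (by omega)
    rw [hd, leadingCoeff_fiberPoly a hi, show n - (n - k) = k by omega] at h
    have h' : (fiberPoly a (blaschke a z)).roots = fiberMS a z := rfl
    rw [h', fiberPoly, Polynomial.coeff_sub, Polynomial.coeff_C_mul] at h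
    simp only [Polynomial.eval_mul, Polynomial.eval_sub, Polynomial.eval_C, Polynomial.eval_X]
    rw [h]
    have hs : ∀ m : ℕ, ((-1 : ℂ) ^ m) * (-1) ^ m = 1 := fun m => by
      rw [← mul_pow]; simp
    linear_combination (-(fiberMS a z).esymm k * (-1) ^ k * (-1) ^ k) * hs n
      - (fiberMS a z).esymm k * hs k
  · refine ⟨0, fun z => ?_⟩
    rw [Multiset.esymm, Multiset.powersetCard_eq_empty _ (by rw [card_fiberMS a hi]; omega)]
    simp

lemma esymm_cons_succ (z : ℂ) (s : Multiset ℂ) (k : ℕ) :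
    (z ::ₘ s).esymm (k + 1) = s.esymm (k + 1) + z * s.esymm k := by
  simp [Multiset.esymm, Multiset.powersetCard_cons, Multiset.map_map,
    Multiset.sum_map_mul_left]

/-- Solving `e_{k+1}(φ_0, …) = e_{k+1}(φ_1, …) + z e_k(φ_1, …)` recursively expresses the
elementary symmetric functions of the reduced fiber through `z` and those of the full fiber. -/
lemma exists_esymm_erase {n : ℕ} (a : Fin n → ℂ) {i : Fin n} (hi : a i = 0)
    (k : ℕ) :
    ∃ q : MvPolynomial (Fin 2) ℂ, ∀ z, z ∈ fiberMS a z →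
      ((fiberMS a z).erase z).esymm k = MvPolynomial.eval ![z, blaschke a z] q := by
  induction k with
  | zero => exact ⟨1, fun z _ => by simp [Multiset.esymm]⟩
  | succ k ih =>
    obtain ⟨q, hq⟩ := ih
    obtain ⟨p, hp⟩ := exists_esymm_fiberMS a hi (k + 1)
    refine ⟨Polynomial.aeval (MvPolynomial.X 1) p - MvPolynomial.X 0 * q, fun z hz => ?_⟩
    have h := esymm_cons_succ z ((fiberMS a z).erase z) k
    rw [Multiset.cons_erase hz, hp, hq z hz] at h
    have hX : MvPolynomial.eval ![z, blaschke a z]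
        (Polynomial.aeval (MvPolynomial.X 1 : MvPolynomial (Fin 2) ℂ) p)
          = p.eval (blaschke a z) := by
      rw [← MvPolynomial.coe_aeval_eq_eval]
      change MvPolynomial.aeval ![z, blaschke a z] _ = _
      rw [← Polynomial.aeval_algHom_apply]
      simp [Polynomial.aeval_def, Polynomial.eval₂_eq_eval_map]
    simp [hX, h]

/-- The fundamental theorem of symmetric polynomials, in evaluated form. If the elementary
symmetric functions of `w` are the values at a point `ev` of fixed elements `q i` of an algebra `R`,
then so is every symmetric polynomial in `w`, by an element of `R` independent of `w` and `ev`. -/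
lemma exists_of_esymm {m : ℕ} {R : Type*} [CommRing R] [Algebra ℂ R] (q : ℕ → R)
    (P : MvPolynomial (Fin m) ℂ) (hP : P.IsSymmetric) :
    ∃ Q : R, ∀ (ev : R →ₐ[ℂ] ℂ) (w : Fin m → ℂ),
      (∀ k, (Finset.univ.val.map w).esymm k = ev (q k)) → MvPolynomial.eval w P = ev Q := by
  obtain ⟨T, hT⟩ := MvPolynomial.esymmAlgHom_surjective (σ := Fin m) (R := ℂ) (n := m)
    (by simp) ⟨P, hP⟩
  refine ⟨MvPolynomial.aeval (fun i : Fin m => q (i + 1)) T, fun ev w h => ?_⟩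
  have hT' : P = MvPolynomial.aeval
      (fun i : Fin m => MvPolynomial.esymm (Fin m) ℂ (i + 1)) T := by
    rw [← MvPolynomial.esymmAlgHom_apply, hT]
  have hw : ∀ k, MvPolynomial.aeval w (MvPolynomial.esymm (Fin m) ℂ k) = ev (q k) := fun k => by
    rw [MvPolynomial.aeval_esymm_eq_multiset_esymm, h]
  rw [← MvPolynomial.coe_aeval_eq_eval]
  change MvPolynomial.aeval w P = _
  rw [hT', ← AlgHom.comp_apply, ← AlgHom.comp_apply, MvPolynomial.comp_aeval,
    MvPolynomial.comp_aeval]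
  simp only [hw]

/-- (i) Every symmetric polynomial (resp. rational) function of the full
family `φ_0(z), …, φ_{n-1}(z)` is a polynomial (resp. rational function) in `B(z)`;
(ii) every symmetric polynomial (resp. rational) function of the reduced family
`φ_1(z), …, φ_{n-1}(z)` is a polynomial (resp. rational function) in `z` and `B(z)`. -/
theorem stmt1 {n : ℕ} (hn : 2 ≤ n) (a : Fin n → ℂ) (ha : ∀ j, a j ∈ uDisk)
    (ha0 : a ⟨0, by omega⟩ = 0) :
    (∀ P : MvPolynomial (Fin n) ℂ, P.IsSymmetric →
      ∃ Q : Polynomial ℂ, ∀ z ∈ uDisk, ∀ w : Fin n → ℂ,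
        Finset.univ.val.map w = fiberMS a z →
        MvPolynomial.eval w P = Q.eval (blaschke a z)) ∧
    (∀ P₁ P₂ : MvPolynomial (Fin n) ℂ, P₁.IsSymmetric → P₂.IsSymmetric →
      ∃ Q₁ Q₂ : Polynomial ℂ, ∀ z ∈ uDisk, ∀ w : Fin n → ℂ,
        Finset.univ.val.map w = fiberMS a z →
        MvPolynomial.eval w P₁ * Q₂.eval (blaschke a z)
          = MvPolynomial.eval w P₂ * Q₁.eval (blaschke a z)) ∧
    (∀ P : MvPolynomial (Fin (n - 1)) ℂ, P.IsSymmetric →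
      ∃ Q : MvPolynomial (Fin 2) ℂ, ∀ z ∈ uDisk, ∀ w : Fin (n - 1) → ℂ,
        Finset.univ.val.map w = (fiberMS a z).erase z →
        MvPolynomial.eval w P = MvPolynomial.eval ![z, blaschke a z] Q) ∧
    (∀ P₁ P₂ : MvPolynomial (Fin (n - 1)) ℂ, P₁.IsSymmetric → P₂.IsSymmetric →
      ∃ Q₁ Q₂ : MvPolynomial (Fin 2) ℂ, ∀ z ∈ uDisk, ∀ w : Fin (n - 1) → ℂ,
        Finset.univ.val.map w = (fiberMS a z).erase z →
        MvPolynomial.eval w P₁ * MvPolynomial.eval ![z, blaschke a z] Q₂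
          = MvPolynomial.eval w P₂ * MvPolynomial.eval ![z, blaschke a z] Q₁) := by
  have full : ∀ P : MvPolynomial (Fin n) ℂ, P.IsSymmetric →
      ∃ Q : Polynomial ℂ, ∀ z ∈ uDisk, ∀ w : Fin n → ℂ,
        Finset.univ.val.map w = fiberMS a z →
        MvPolynomial.eval w P = Q.eval (blaschke a z) := by
    intro P hP
    choose q hq using exists_esymm_fiberMS a ha0
    obtain ⟨Q, hQ⟩ := exists_of_esymm q P hP
    refine ⟨Q, fun z _ w hw => ?_⟩
    have h := hQ (Polynomial.aeval (blaschke a z)) w fun k => by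
      rw [hw, hq, Polynomial.coe_aeval_eq_eval]
    rwa [Polynomial.coe_aeval_eq_eval] at h
  have reduced : ∀ P : MvPolynomial (Fin (n - 1)) ℂ, P.IsSymmetric →
      ∃ Q : MvPolynomial (Fin 2) ℂ, ∀ z ∈ uDisk, ∀ w : Fin (n - 1) → ℂ,
        Finset.univ.val.map w = (fiberMS a z).erase z →
        MvPolynomial.eval w P = MvPolynomial.eval ![z, blaschke a z] Q := by
    intro P hP
    choose q hq using exists_esymm_erase a ha0
    obtain ⟨Q, hQ⟩ := exists_of_esymm q P hP
    refine ⟨Q, fun z _ w hw => ?_⟩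
    -- `z` lies in its own fiber: otherwise erasing it would leave `n` elements, not `n - 1`.
    have hz : z ∈ fiberMS a z := by
      by_contra hz
      have hc := congrArg Multiset.card hw
      rw [Multiset.erase_of_notMem hz, card_fiberMS a ha0] at hc
      simp at hc
      omega
    exact hQ (MvPolynomial.aeval ![z, blaschke a z]) w fun k => by
      rw [hw, hq k z hz, MvPolynomial.aeval_eq_eval]
  -- For quotients, numerator and denominator are expressed separately.
  refine ⟨full, fun P₁ P₂ h₁ h₂ => ?_, reduced, fun P₁ P₂ h₁ h₂ => ?_⟩
  · obtain ⟨Q₁, hQ₁⟩ := full P₁ h₁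
    obtain ⟨Q₂, hQ₂⟩ := full P₂ h₂
    refine ⟨Q₁, Q₂, fun z hz w hw => ?_⟩
    rw [hQ₁ z hz w hw, hQ₂ z hz w hw, mul_comm]
  · obtain ⟨Q₁, hQ₁⟩ := reduced P₁ h₁
    obtain ⟨Q₂, hQ₂⟩ := reduced P₂ h₂
    refine ⟨Q₁, Q₂, fun z hz w hw => ?_⟩
    rw [hQ₁ z hz w hw, hQ₂ z hz w hw, mul_comm]
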